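/- arXiv:1503.05704 — 2 statements merged into one kernel-verified Lean document; each statement's English description precedes it below -/
import Mathlib

section
/- Let q ≥ 2 be an even integer and let k ≥ 2. Then, as an inequality of real numbers, R(S_{k+1}(q)) ≤ ((k-1)·(q-1)·φ(q) + (q² - q - φ(q))·(q^{k+1} - q²))/(q·(q-1)²) + R(S_2(q)), where R denotes the covering radius and φ is Euler's totient function. -/
/-- The Hamming distance between two words: the number of coordinates where they differ. -/
noncomputable def hdist {q : ℕ} {I : Type*} (x y : I → ZMod q) : ℕ :=
  Set.ncard {i | x i ≠ y i}

/-- The covering radius of a code `C`: the maximum over all words `u` of the minimum Hamming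
distance from `u` to a codeword of `C`. -/
noncomputable def covRad {q : ℕ} {I : Type*} (C : Set (I → ZMod q)) : ℕ :=
  sSup {r | ∃ u : I → ZMod q, r = sInf {e | ∃ c ∈ C, e = hdist u c}}

/-- `Vset q k` consists of the nonzero words `v : Fin k → ZMod q` whose last nonzero
coordinate equals `1` (one representative from each free rank-one submodule). -/
def Vset (q k : ℕ) : Set (Fin k → ZMod q) :=
  {v | v ≠ 0 ∧ ∃ m : Fin k, v m ≠ 0 ∧ (∀ i, m < i → v i = 0) ∧ v m = 1}

/-- The `ZMod q`-Simplex code of dimension `k`: the words obtained by evaluating a linear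
form `u` at all columns `v ∈ Vset q k`. -/
def SimplexCode (q k : ℕ) : Set (↥(Vset q k) → ZMod q) :=
  {c | ∃ u : Fin k → ZMod q, c = fun v : ↥(Vset q k) => ∑ i, u i * v.1 i}

/-!
The columns of `S_{k+1}` are the vectors `(v, 0)` with `v` a column of `S_k`, together with the
vectors `(x, 1)` with `x` arbitrary. Given a word on these columns, approximate its first block by
a linear form `w` to within `R(S_k)`. The form `(w, t)` restricts to `w` on the first block and to
`w + t` on the second, where by pigeonhole some `t` makes it agree with the word in at least a
fraction `1 / q` of the `q ^ k` places. Hence `R(S_{k+1}) ≤ R(S_k) + q ^ k - q ^ (k - 1)`, and the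
sum telescopes to `R(S_{k+1}) ≤ R(S_2) + q ^ k - q`. The claimed bound exceeds this one because it
is antitone in `φ(q) ≤ q - 1`, and substituting `q - 1` for `φ(q)` gives `q ^ k - q + (k - 1) / q`.
-/

section Hamming

variable {q : ℕ} {I J K : Type*}

theorem hdist_le_card [Finite I] (x y : I → ZMod q) : hdist x y ≤ Nat.card I :=
  Set.ncard_le_card _

theorem hdist_sub_left (x y z : I → ZMod q) : hdist (x - y) z = hdist x (y + z) := by
  simp only [hdist, Pi.sub_apply, Pi.add_apply, ne_eq, sub_eq_iff_eq_add']

theorem hdist_add_ncard_eq [Finite I] (x y : I → ZMod q) :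
    hdist x y + {i | x i = y i}.ncard = Nat.card I := by
  rw [add_comm]
  exact Set.ncard_add_ncard_compl _

theorem hdist_le_hdist_comp_add_hdist_comp [Finite J] [Finite K] {f : J → I} {g : K → I}
    (hfg : Set.range f ∪ Set.range g = Set.univ) (x y : I → ZMod q) :
    hdist x y ≤ hdist (x ∘ f) (y ∘ f) + hdist (x ∘ g) (y ∘ g) := by
  have hcover : {i | x i ≠ y i} ⊆
      f '' {j | (x ∘ f) j ≠ (y ∘ f) j} ∪ g '' {l | (x ∘ g) l ≠ (y ∘ g) l} := by
    intro i hi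
    rcases hfg.ge (Set.mem_univ i) with ⟨j, rfl⟩ | ⟨l, rfl⟩
    · exact Or.inl ⟨j, hi, rfl⟩
    · exact Or.inr ⟨l, hi, rfl⟩
  calc hdist x y
      ≤ (f '' {j | (x ∘ f) j ≠ (y ∘ f) j} ∪ g '' {l | (x ∘ g) l ≠ (y ∘ g) l}).ncard :=
        Set.ncard_le_ncard hcover ((Set.toFinite _).image f |>.union ((Set.toFinite _).image g))
    _ ≤ _ := Set.ncard_union_le _ _
    _ ≤ hdist (x ∘ f) (y ∘ f) + hdist (x ∘ g) (y ∘ g) :=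
        add_le_add Set.ncard_image_le Set.ncard_image_le

theorem exists_card_le_mul_ncard_fiber [Finite I] [NeZero q] (x : I → ZMod q) :
    ∃ t, Nat.card I ≤ q * {i | x i = t}.ncard := by
  classical
  have := Fintype.ofFinite I
  by_contra! hsmall
  have hsum : ∑ t : ZMod q, {i | x i = t}.ncard = Nat.card I := by
    simp only [Set.ncard_eq_toFinset_card', Set.toFinset_ofPred, Nat.card_eq_fintype_card]
    exact (Finset.card_eq_sum_card_fiberwise fun i _ => Finset.mem_univ (x i)).symm
  have hlt : ∑ t : ZMod q, q * {i | x i = t}.ncard < ∑ _t : ZMod q, Nat.card I :=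
    Finset.sum_lt_sum_of_nonempty Finset.univ_nonempty fun t _ => hsmall t
  simp [← Finset.mul_sum, hsum, ZMod.card] at hlt

theorem exists_hdist_add_const_le [Finite I] [NeZero q] (x y : I → ZMod q) :
    ∃ t, hdist x (y + Function.const I t) ≤ (q - 1) * Nat.card I / q := by
  obtain ⟨t, ht⟩ := exists_card_le_mul_ncard_fiber (x - y)
  refine ⟨t, ?_⟩
  have hsplit : hdist (x - y) (Function.const I t) + {i | (x - y) i = t}.ncard = Nat.card I :=
    hdist_add_ncard_eq (x - y) (Function.const I t)
  rw [← hdist_sub_left, Nat.le_div_iff_mul_le (NeZero.pos q), Nat.sub_one_mul]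
  apply Nat.le_sub_of_add_le
  calc hdist (x - y) (Function.const I t) * q + Nat.card I
      ≤ hdist (x - y) (Function.const I t) * q + q * {i | (x - y) i = t}.ncard := by gcongr
    _ = q * Nat.card I := by rw [← hsplit]; ring

end Hamming

section CoveringRadius

variable {q : ℕ} {I J K : Type*}

theorem covRad_le {C : Set (I → ZMod q)} {r : ℕ} (h : ∀ u, ∃ c ∈ C, hdist u c ≤ r) :
    covRad C ≤ r := by
  refine csSup_le ⟨_, 0, rfl⟩ ?_
  rintro _ ⟨u, rfl⟩
  obtain ⟨c, hc, hcr⟩ := h u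
  exact le_trans (Nat.sInf_le ⟨c, hc, rfl⟩) hcr

theorem exists_hdist_le_covRad [Finite I] {C : Set (I → ZMod q)} (hC : C.Nonempty)
    (u : I → ZMod q) : ∃ c ∈ C, hdist u c ≤ covRad C := by
  obtain ⟨c₀, hc₀⟩ := hC
  have hbdd : BddAbove {r | ∃ u : I → ZMod q, r = sInf {e | ∃ c ∈ C, e = hdist u c}} := by
    refine ⟨Nat.card I, ?_⟩
    rintro _ ⟨u', rfl⟩
    exact le_trans (Nat.sInf_le ⟨c₀, hc₀, rfl⟩) (hdist_le_card u' c₀)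
  obtain ⟨c, hc, hmin⟩ :=
    Nat.sInf_mem (s := {e | ∃ c ∈ C, e = hdist u c}) ⟨_, c₀, hc₀, rfl⟩
  exact ⟨c, hc, hmin ▸ le_csSup hbdd ⟨u, rfl⟩⟩

theorem covRad_le_covRad_add_of_extend [Finite J] [Finite K] [NeZero q]
    {C : Set (I → ZMod q)} {D : Set (J → ZMod q)} (hD : D.Nonempty) {f : J → I} {g : K → I}
    (hfg : Set.range f ∪ Set.range g = Set.univ)
    (hext : ∀ d ∈ D, ∃ y : K → ZMod q, ∀ t, ∃ c ∈ C,
      c ∘ f = d ∧ c ∘ g = y + Function.const K t) :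
    covRad C ≤ covRad D + (q - 1) * Nat.card K / q := by
  refine covRad_le fun u => ?_
  obtain ⟨d, hd, hd_near⟩ := exists_hdist_le_covRad hD (u ∘ f)
  obtain ⟨y, hy⟩ := hext d hd
  obtain ⟨t, ht_near⟩ := exists_hdist_add_const_le (u ∘ g) y
  obtain ⟨c, hc, hcf, hcg⟩ := hy t
  refine ⟨c, hc, (hdist_le_hdist_comp_add_hdist_comp hfg u c).trans ?_⟩
  rw [hcf, hcg]
  exact add_le_add hd_near ht_near

end CoveringRadius

namespace Vset

variable {q k : ℕ}

theorem snoc_zero_mem {v : Fin k → ZMod q} (hv : v ∈ Vset q k) :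
    (Fin.snoc v 0 : Fin (k + 1) → ZMod q) ∈ Vset q (k + 1) := by
  obtain ⟨_, m, hm_ne, hm_last, hm_one⟩ := hv
  refine ⟨fun h => hm_ne ?_, m.castSucc, by simpa using hm_ne, fun i hi => ?_,
    by simpa using hm_one⟩
  · simpa using congrFun h m.castSucc
  · induction i using Fin.lastCases with
    | last => simp
    | cast j => simpa using hm_last j (by simpa using hi)

theorem snoc_one_mem [Nontrivial (ZMod q)] (x : Fin k → ZMod q) :
    (Fin.snoc x 1 : Fin (k + 1) → ZMod q) ∈ Vset q (k + 1) := by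
  refine ⟨fun h => one_ne_zero (α := ZMod q) ?_, Fin.last k, by simp, fun i hi => ?_, by simp⟩
  · simpa using congrFun h (Fin.last k)
  · exact absurd (Fin.le_last i) hi.not_ge

theorem eq_snoc_zero_or_eq_snoc_one {v : Fin (k + 1) → ZMod q} (hv : v ∈ Vset q (k + 1)) :
    (∃ x ∈ Vset q k, Fin.snoc x 0 = v) ∨ ∃ x : Fin k → ZMod q, Fin.snoc x 1 = v := by
  obtain ⟨_, m, hm_ne, hm_last, hm_one⟩ := hv
  induction m using Fin.lastCases with
  | last => exact Or.inr ⟨Fin.init v, by rw [← hm_one, Fin.snoc_init_self]⟩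
  | cast j =>
    have hinit : Fin.init v ∈ Vset q k :=
      ⟨fun h => hm_ne (congrFun h j), j, hm_ne,
        fun i hi => hm_last i.castSucc (by simpa using hi), hm_one⟩
    exact Or.inl ⟨Fin.init v, hinit,
      by rw [← hm_last (Fin.last k) (Fin.castSucc_lt_last j), Fin.snoc_init_self]⟩

/-- The embedding `v ↦ (v, 0)` of the columns of `S_k` into those of `S_{k+1}`. -/
def snocZero (v : Vset q k) : Vset q (k + 1) :=
  ⟨Fin.snoc v.1 0, snoc_zero_mem v.2⟩

/-- The embedding `x ↦ (x, 1)` of all vectors of length `k` into the columns of `S_{k+1}`. -/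
def snocOne [Nontrivial (ZMod q)] (x : Fin k → ZMod q) : Vset q (k + 1) :=
  ⟨Fin.snoc x 1, snoc_one_mem x⟩

theorem range_snocZero_union_range_snocOne [Nontrivial (ZMod q)] :
    Set.range (snocZero (q := q) (k := k)) ∪ Set.range snocOne = Set.univ := by
  refine Set.eq_univ_of_forall fun ⟨v, hv⟩ => ?_
  rcases eq_snoc_zero_or_eq_snoc_one hv with ⟨x, hx, rfl⟩ | ⟨x, rfl⟩
  · exact Or.inl ⟨⟨x, hx⟩, rfl⟩
  · exact Or.inr ⟨x, rfl⟩

end Vset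

theorem sum_snoc_mul_snoc {R : Type*} [NonUnitalNonAssocSemiring R] {k : ℕ} (w x : Fin k → R)
    (s t : R) :
    ∑ i, (Fin.snoc w s : Fin (k + 1) → R) i * (Fin.snoc x t : Fin (k + 1) → R) i =
      ∑ i, w i * x i + s * t := by
  simp [Fin.sum_univ_castSucc]

section SimplexCode

variable {q : ℕ}

theorem simplexCode_nonempty (q k : ℕ) : (SimplexCode q k).Nonempty :=
  ⟨_, 0, rfl⟩

theorem covRad_simplexCode_succ_le (hq : 2 ≤ q) (k : ℕ) :
    covRad (SimplexCode q (k + 1)) ≤ covRad (SimplexCode q k) + (q - 1) * q ^ k / q := by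
  have : NeZero q := ⟨by omega⟩
  have : Fact (1 < q) := ⟨hq⟩
  have hcard : Nat.card (Fin k → ZMod q) = q ^ k := by simp
  rw [← hcard]
  refine covRad_le_covRad_add_of_extend (simplexCode_nonempty q k)
    Vset.range_snocZero_union_range_snocOne ?_
  rintro _ ⟨w, rfl⟩
  refine ⟨fun x => ∑ i, w i * x i, fun t => ⟨_, ⟨Fin.snoc w t, rfl⟩, ?_, ?_⟩⟩
  · ext v
    simp [Vset.snocZero, sum_snoc_mul_snoc]
  · ext x
    simp [Vset.snocOne, sum_snoc_mul_snoc]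

theorem covRad_simplexCode_add_pow_le (hq : 2 ≤ q) {m n : ℕ} (hmn : m ≤ n) :
    covRad (SimplexCode q (n + 1)) + q ^ m ≤ covRad (SimplexCode q (m + 1)) + q ^ n := by
  induction n, hmn using Nat.le_induction with
  | base => rfl
  | succ n _ ih =>
    have hdiv : (q - 1) * q ^ (n + 1) / q = q ^ (n + 1) - q ^ n := by
      rw [pow_succ, ← mul_assoc, Nat.mul_div_cancel _ (by omega), Nat.sub_one_mul, mul_comm]
    have hstep := covRad_simplexCode_succ_le hq (n + 1)
    have hpow : q ^ n ≤ q ^ (n + 1) := Nat.pow_le_pow_right (by omega) n.le_succ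
    omega

end SimplexCode

theorem pow_sub_self_le_of_le_sub_one {q p : ℝ} (hq : 1 < q) (hp : p ≤ q - 1) (n : ℕ) :
    q ^ (n + 1) - q ≤ (n * (q - 1) * p + (q ^ 2 - q - p) * (q ^ (n + 2) - q ^ 2)) /
      (q * (q - 1) ^ 2) := by
  have hbernoulli : n * (q - 1) ≤ q ^ n - 1 := by
    linarith [one_add_mul_sub_le_pow (by linarith : -1 ≤ q) n]
  have hslope : n * (q - 1) ≤ q ^ (n + 2) - q ^ 2 := by
    have hpow : 1 ≤ q ^ n := one_le_pow₀ hq.le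
    calc n * (q - 1) ≤ q ^ n - 1 := hbernoulli
      _ ≤ q ^ 2 * (q ^ n - 1) := le_mul_of_one_le_left (by linarith) (one_le_pow₀ hq.le)
      _ = q ^ (n + 2) - q ^ 2 := by ring
  have hdenom : 0 < q * (q - 1) ^ 2 := mul_pos (by linarith) (pow_pos (sub_pos.2 hq) 2)
  rw [le_div_iff₀ hdenom]
  calc (q ^ (n + 1) - q) * (q * (q - 1) ^ 2)
      ≤ (q ^ (n + 1) - q) * (q * (q - 1) ^ 2) + n * (q - 1) ^ 2 :=
        le_add_of_nonneg_right (by positivity)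
    _ = q * (q - 1) * (q ^ (n + 2) - q ^ 2) -
          (q - 1) * (q ^ (n + 2) - q ^ 2 - n * (q - 1)) := by ring
    _ ≤ q * (q - 1) * (q ^ (n + 2) - q ^ 2) -
          p * (q ^ (n + 2) - q ^ 2 - n * (q - 1)) :=
        sub_le_sub_left (mul_le_mul_of_nonneg_right hp (sub_nonneg.2 hslope)) _
    _ = n * (q - 1) * p + (q ^ 2 - q - p) * (q ^ (n + 2) - q ^ 2) := by ring

theorem covRad_simplex_le_general (q k : ℕ) (hq : 2 ≤ q) (hk : 1 ≤ k) :
    (covRad (SimplexCode q (k + 1)) : ℝ) ≤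
      (((k : ℝ) - 1) * ((q : ℝ) - 1) * (Nat.totient q : ℝ) +
          ((q : ℝ) ^ 2 - (q : ℝ) - (Nat.totient q : ℝ)) *
            ((q : ℝ) ^ (k + 1) - (q : ℝ) ^ 2)) /
        ((q : ℝ) * ((q : ℝ) - 1) ^ 2) +
      (covRad (SimplexCode q 2) : ℝ) := by
  obtain ⟨n, rfl⟩ := Nat.exists_eq_add_of_le' hk
  have hq_one : (1 : ℝ) < q := by exact_mod_cast hq
  have htotient : (Nat.totient q : ℝ) ≤ q - 1 := by
    rw [le_sub_iff_add_le]
    exact_mod_cast Nat.totient_lt q hq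
  have htelescope : (covRad (SimplexCode q (n + 2)) : ℝ) + q ≤
      covRad (SimplexCode q 2) + (q : ℝ) ^ (n + 1) := by
    exact_mod_cast pow_one q ▸ covRad_simplexCode_add_pow_le hq hk
  have hcompare := pow_sub_self_le_of_le_sub_one hq_one htotient n
  rw [Nat.cast_add_one, add_sub_cancel_right]
  linarith

/-- For even `q` and `k ≥ 2`, the covering radius of the `ZMod q`-Simplex code satisfies
`R(S_{k+1}) ≤ ((k-1)(q-1)φ(q) + (q²-q-φ(q))(q^{k+1}-q²))/(q(q-1)²) + R(S₂)`. -/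
theorem covRad_simplex_le (q k : ℕ) (hq : 2 ≤ q) (hqe : Even q) (hk : 2 ≤ k) :
    (covRad (SimplexCode q (k + 1)) : ℝ) ≤
      (((k : ℝ) - 1) * ((q : ℝ) - 1) * (Nat.totient q : ℝ) +
          ((q : ℝ) ^ 2 - (q : ℝ) - (Nat.totient q : ℝ)) *
            ((q : ℝ) ^ (k + 1) - (q : ℝ) ^ 2)) /
        ((q : ℝ) * ((q : ℝ) - 1) ^ 2) +
      (covRad (SimplexCode q 2) : ℝ) :=
  covRad_simplex_le_general q k hq (one_le_two.trans hk)
end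

section
/- Let q ≥ 2 be an even integer and let k ≥ 2. Then R(M_{k+1,k}) ≤ ⌊(q-1)·φ(q)·n_k/q⌋ + (q-1-φ(q))·n_k + 1, where n_k = (q^k - 1)/(q - 1). -/
/-- `Wset q k u` is the set of columns of the `ZMod q`-MacDonald code `M_{k,u}`: the columns
`v ∈ Vset q k` having a nonzero coordinate at some index `i < k - u`. -/
def Wset (q k u : ℕ) : Set (Fin k → ZMod q) :=
  {v | v ∈ Vset q k ∧ ∃ i : Fin k, (i : ℕ) < k - u ∧ v i ≠ 0}

/-- The `ZMod q`-MacDonald code `M_{k,u}`: the words obtained by evaluating a linear form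
`x` at all columns `v ∈ Wset q k u`. -/
def MacDonaldCode (q k u : ℕ) : Set (↥(Wset q k u) → ZMod q) :=
  {c | ∃ x : Fin k → ZMod q, c = fun v : ↥(Wset q k u) => ∑ i, x i * v.1 i}

/-!
If all coordinate projections of an additive code are surjective, then each of them is
equidistributed, so on average a codeword disagrees with a given word in a fraction `(q - 1) / q` of
the coordinates, and some codeword is at least that close. Every column of a MacDonald code has an
entry `1`, which makes the projections surjective. A column of `M_{k+1,k}` is either `(1, 0, …, 0)`
or a nonzero entry followed by one of the `n_k` columns in `V_k`, so `M_{k+1,k}` has length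
`(q - 1) n_k + 1`; splitting the factor `q - 1` as `φ(q) + (q - 1 - φ(q))` turns the averaging bound
into the one claimed.
-/

open Finset Function Matrix

section Averaging

variable {G A I : Type*} [AddGroup G] [AddGroup A] [Fintype A] [DecidableEq A] [Fintype I]

lemma card_mul_card_fiber_eq_card [Fintype G] (f : G →+ A) (hf : Surjective f) (a : A) :
    Fintype.card A * #{g | f g = a} = Fintype.card G := by
  have fiber_card (b : A) : #{g | f g = b} = #{g | f g = a} :=
    AddMonoidHom.card_fiber_eq_of_mem_range f (hf b) (hf a)
  calc Fintype.card A * #{g | f g = a} = ∑ b : A, #{g | f g = b} := by simp [fiber_card]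
    _ = Fintype.card G := (card_eq_sum_card_fiberwise fun _ _ ↦ mem_univ _).symm

lemma card_mul_card_ne_eq [Fintype G] (f : G →+ A) (hf : Surjective f) (a : A) :
    Fintype.card A * #{g | a ≠ f g} = (Fintype.card A - 1) * Fintype.card G := by
  have card_split : #{g | f g = a} + #{g | a ≠ f g} = Fintype.card G := by
    simpa only [ne_comm, card_univ] using
      card_filter_add_card_filter_not (s := univ) fun g ↦ f g = a
  have card_mul_split : Fintype.card G + Fintype.card A * #{g | a ≠ f g} =
      Fintype.card A * Fintype.card G := by
    nth_rw 1 [← card_mul_card_fiber_eq_card f hf a]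
    rw [← mul_add, card_split]
  rw [Nat.sub_one_mul]
  exact Nat.eq_sub_of_add_eq' card_mul_split

lemma card_mul_sum_hammingDist_eq [Fintype G] (f : G →+ I → A)
    (hf : ∀ i, Surjective fun g ↦ f g i) (w : I → A) :
    Fintype.card A * ∑ g, hammingDist w (f g) =
      Fintype.card G * ((Fintype.card A - 1) * Fintype.card I) := by
  calc Fintype.card A * ∑ g, hammingDist w (f g)
      = ∑ i, Fintype.card A * #{g | w i ≠ f g i} := by
        simp only [hammingDist, card_filter, ← mul_sum]
        rw [sum_comm]
    _ = ∑ _i : I, (Fintype.card A - 1) * Fintype.card G :=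
        sum_congr rfl fun i _ ↦ card_mul_card_ne_eq ((Pi.evalAddMonoidHom _ i).comp f) (hf i) (w i)
    _ = Fintype.card G * ((Fintype.card A - 1) * Fintype.card I) := by
        rw [sum_const, card_univ, smul_eq_mul]
        ring

lemma exists_hammingDist_le [Finite G] (f : G →+ I → A)
    (hf : ∀ i, Surjective fun g ↦ f g i) (w : I → A) :
    ∃ g, hammingDist w (f g) ≤ (Fintype.card A - 1) * Fintype.card I / Fintype.card A := by
  have := Fintype.ofFinite G
  have sum_le : ∑ g, Fintype.card A * hammingDist w (f g) ≤
      ∑ _g : G, (Fintype.card A - 1) * Fintype.card I := by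
    rw [← mul_sum, card_mul_sum_hammingDist_eq f hf, sum_const, card_univ, smul_eq_mul]
  obtain ⟨g, -, hg⟩ := exists_le_of_sum_le univ_nonempty sum_le
  exact ⟨g, (Nat.le_div_iff_mul_le Fintype.card_pos).2 (mul_comm _ (Fintype.card A) ▸ hg)⟩

end Averaging

section CoveringRadius

variable {q : ℕ} {I : Type*}

lemma hdist_eq_hammingDist [Fintype I] (x y : I → ZMod q) : hdist x y = hammingDist x y := by
  simp [hdist, hammingDist, ← Set.ncard_coe_finset]

lemma covRad_le_of_forall_exists {C : Set (I → ZMod q)} {r : ℕ}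
    (h : ∀ w, ∃ c ∈ C, hdist w c ≤ r) : covRad C ≤ r := by
  refine csSup_le' ?_
  rintro _ ⟨w, rfl⟩
  obtain ⟨c, hc, hwc⟩ := h w
  have sInf_le : sInf {e | ∃ c ∈ C, e = hdist w c} ≤ hdist w c := Nat.sInf_le ⟨c, hc, rfl⟩
  exact sInf_le.trans hwc

variable [NeZero q] [Fintype I]

lemma covRad_range_le {G : Type*} [AddGroup G] [Finite G] (f : G →+ I → ZMod q)
    (hf : ∀ i, Surjective fun g ↦ f g i) :
    covRad (Set.range f) ≤ (q - 1) * Fintype.card I / q := by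
  refine covRad_le_of_forall_exists fun w ↦ ?_
  obtain ⟨g, hg⟩ := exists_hammingDist_le f hf w
  exact ⟨f g, ⟨g, rfl⟩, by simpa only [hdist_eq_hammingDist, ZMod.card] using hg⟩

lemma covRad_range_vecMul_le {m : Type*} [Fintype m] (M : Matrix m I (ZMod q))
    (hM : ∀ j, ∃ i, IsUnit (M i j)) :
    covRad (Set.range (· ᵥ* M)) ≤ (q - 1) * Fintype.card I / q := by
  classical
  refine covRad_range_le M.vecMulLinear.toAddMonoidHom fun j a ↦ ?_
  obtain ⟨i, u, hu⟩ := hM j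
  exact ⟨Pi.single i (a * ↑u⁻¹), by simp [← hu]⟩

end CoveringRadius

section MacDonald

/-- The generator matrix of the MacDonald code `M_{k,u}`, with the elements of `Wset q k u` as
its columns. -/
def macDonaldMatrix (q k u : ℕ) : Matrix (Fin k) (Wset q k u) (ZMod q) :=
  of fun i v ↦ v.1 i

lemma macDonaldCode_eq_range_vecMul (q k u : ℕ) :
    MacDonaldCode q k u = Set.range (· ᵥ* macDonaldMatrix q k u) :=
  Set.ext fun _ ↦ exists_congr fun _ ↦ eq_comm

lemma covRad_macDonaldCode_le (q k u : ℕ) [NeZero q] :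
    covRad (MacDonaldCode q k u) ≤ (q - 1) * (Wset q k u).ncard / q := by
  have := Fintype.ofFinite (Wset q k u)
  rw [macDonaldCode_eq_range_vecMul, ← Nat.card_coe_set_eq, Nat.card_eq_fintype_card]
  refine covRad_range_vecMul_le _ fun ⟨v, ⟨_, m, _, _, hm⟩, _⟩ ↦ ⟨m, ?_⟩
  simp [macDonaldMatrix, hm]

end MacDonald

section Columns

variable {q k : ℕ}

lemma mem_wset_succ_self_iff {v : Fin (k + 1) → ZMod q} :
    v ∈ Wset q (k + 1) k ↔ v ∈ Vset q (k + 1) ∧ v 0 ≠ 0 := by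
  simp [Wset]

section Recursion

variable [Nontrivial (ZMod q)]

lemma mem_vset_iff {v : Fin k → ZMod q} :
    v ∈ Vset q k ↔ ∃ m, v m = 1 ∧ ∀ i, m < i → v i = 0 := by
  constructor
  · rintro ⟨-, m, -, h_zero, h_one⟩
    exact ⟨m, h_one, h_zero⟩
  · rintro ⟨m, h_one, h_zero⟩
    have hm : v m ≠ 0 := h_one ▸ one_ne_zero
    exact ⟨ne_iff.2 ⟨m, hm⟩, m, hm, h_zero, h_one⟩

lemma vecCons_mem_vset_iff {a : ZMod q} {v : Fin k → ZMod q} :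
    vecCons a v ∈ Vset q (k + 1) ↔ v = 0 ∧ a = 1 ∨ v ∈ Vset q k := by
  simp [mem_vset_iff, Fin.exists_fin_succ, Fin.forall_fin_succ, funext_iff, and_comm]

lemma vset_succ :
    Vset q (k + 1) = insert (vecCons 1 0) (Set.image2 vecCons Set.univ (Vset q k)) := by
  ext v
  obtain ⟨a, v, rfl⟩ : ∃ a t, vecCons a t = v := ⟨_, _, cons_head_tail v⟩
  simp [vecCons_mem_vset_iff, Set.mem_image2, vecCons_inj, and_comm]

lemma wset_succ_self :
    Wset q (k + 1) k = insert (vecCons 1 0) (Set.image2 vecCons {0}ᶜ (Vset q k)) := by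
  ext v
  obtain ⟨a, v, rfl⟩ : ∃ a t, vecCons a t = v := ⟨_, _, cons_head_tail v⟩
  have ne_zero_of_eq_one : a = 1 → a ≠ 0 := fun h ↦ h ▸ one_ne_zero
  simp only [mem_wset_succ_self_iff, vecCons_mem_vset_iff, Set.mem_insert_iff, Set.mem_image2,
    Set.mem_compl_singleton_iff, vecCons_inj, cons_val_zero]
  grind

end Recursion

lemma ncard_insert_image2_vecCons_vset [NeZero q] (S : Set (ZMod q)) :
    (insert (vecCons 1 0) (Set.image2 vecCons S (Vset q k))).ncard =
      S.ncard * (Vset q k).ncard + 1 := by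
  have vecCons_injective : Injective (uncurry (vecCons (α := ZMod q) (n := k))) :=
    (Fin.cons_injective2 (α := fun _ ↦ ZMod q)).uncurry
  have notMem : vecCons 1 0 ∉ Set.image2 vecCons S (Vset q k) := by
    rintro ⟨a, -, v, hv, h⟩
    exact hv.1 (Fin.cons_injective2 h).2
  rw [Set.ncard_insert_of_notMem notMem, ← Set.image_uncurry_prod,
    Set.ncard_image_of_injective _ vecCons_injective, Set.ncard_prod]

variable [Fact (1 < q)]

lemma ncard_vset (k : ℕ) : (Vset q k).ncard = (q ^ k - 1) / (q - 1) := by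
  rw [← Nat.geomSum_eq (Fact.out : 1 < q)]
  induction k with
  | zero => simp [Vset]
  | succ k ih =>
    rw [vset_succ, ncard_insert_image2_vecCons_vset, ih, geom_sum_succ, Set.ncard_univ,
      Nat.card_zmod]

lemma ncard_wset_succ_self (k : ℕ) :
    (Wset q (k + 1) k).ncard = (q - 1) * ((q ^ k - 1) / (q - 1)) + 1 := by
  rw [wset_succ_self, ncard_insert_image2_vecCons_vset, ncard_vset, Set.ncard_compl,
    Set.ncard_singleton, Nat.card_zmod]

end Columns

lemma sub_one_mul_sub_one_mul_add_one_div_le {q f : ℕ} (hq : 0 < q) (hf : f ≤ q - 1) (n : ℕ) :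
    (q - 1) * ((q - 1) * n + 1) / q ≤ (q - 1) * f * n / q + (q - 1 - f) * n + 1 := by
  set s := q - 1 - f
  have hs : q - 1 = f + s := by omega
  calc (q - 1) * ((q - 1) * n + 1) / q = ((q - 1) * f * n + (q - 1) * (s * n + 1)) / q := by
        congr 1
        nth_rw 2 [hs]
        ring
    _ ≤ ((q - 1) * f * n + q * (s * n + 1)) / q := by gcongr; exact q.sub_le 1
    _ = (q - 1) * f * n / q + s * n + 1 := by rw [Nat.add_mul_div_left _ _ hq, add_assoc]

theorem covRad_macdonald_top_le_general (q k : ℕ) (hq : 2 ≤ q) :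
    covRad (MacDonaldCode q (k + 1) k) ≤
      (q - 1) * Nat.totient q * ((q ^ k - 1) / (q - 1)) / q +
        (q - 1 - Nat.totient q) * ((q ^ k - 1) / (q - 1)) + 1 := by
  have : Fact (1 < q) := ⟨hq⟩
  calc covRad (MacDonaldCode q (k + 1) k)
      ≤ (q - 1) * (Wset q (k + 1) k).ncard / q := covRad_macDonaldCode_le q (k + 1) k
    _ = (q - 1) * ((q - 1) * ((q ^ k - 1) / (q - 1)) + 1) / q := by rw [ncard_wset_succ_self]
    _ ≤ _ := sub_one_mul_sub_one_mul_add_one_div_le (Nat.zero_lt_of_lt hq)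
        (Nat.le_sub_one_of_lt (Nat.totient_lt q hq)) _

/-- For even `q` and `k ≥ 2`, the covering radius of the `ZMod q`-MacDonald code satisfies
`R(M_{k+1,k}) ≤ ⌊(q-1)·φ(q)·n_k/q⌋ + (q-1-φ(q))·n_k + 1`, where `n_k = (q^k-1)/(q-1)`. -/
theorem covRad_macdonald_top_le (q k : ℕ) (hq : 2 ≤ q) (hqe : Even q) (hk : 2 ≤ k) :
    covRad (MacDonaldCode q (k + 1) k) ≤
      (q - 1) * Nat.totient q * ((q ^ k - 1) / (q - 1)) / q +
        (q - 1 - Nat.totient q) * ((q ^ k - 1) / (q - 1)) + 1 :=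
  covRad_macdonald_top_le_general q k hq
end
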